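/- arXiv:1510.07504 — 2 statements merged into one kernel-verified Lean document; each statement's English description precedes it below -/
import Mathlib

section
/- Let λ > 1 and let f : ℝ³ → ℝ³ be a measurable λ-DSS vector field. Then sup_{β>0} β³ · |{x ∈ ℝ³ : |f(x)| > β}| ≤ (λ³ / (3(λ−1))) · ∫_{A₁} |f(x)|³ dx, where A₁ = {x ∈ ℝ³ : 1 ≤ |x| < λ}. -/
/-!
Cut `ℝ³` into the annuli `lᵏ A₁`, `k ∈ ℤ`, where `A₁ = {1 ≤ |x| < l}`. Discrete
self-similarity gives `f (lᵏ y) = l⁻ᵏ f y` for almost every `y` (`ae_dss_zpow`), so the change of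
variables `x = lᵏ y` turns the superlevel set of `f` inside `lᵏ A₁` into
`l³ᵏ · |{y ∈ A₁ : lᵏ β < |f y|}|` (`volume_superlevel_annulus`). Summing over `k` and exchanging
sum and integral, everything reduces to the pointwise geometric series bound
`β³ · ∑ₖ l³ᵏ 1[lᵏ β < t] ≤ t³ · l³ / (l³ - 1)` (`tsum_zpow_indicator_le`), together with
`l³ - 1 = (l - 1) (l² + l + 1) ≥ 3 (l - 1)`.
-/

open MeasureTheory
open scoped ENNReal NNReal

local notation "E3" => EuclideanSpace ℝ (Fin 3)

/-- Iterating the self-similarity relation: almost every `y` satisfies it at all scales `lᵏ`. The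
exceptional sets stay null because nonzero dilations preserve null sets. -/
lemma ae_dss_zpow (l : ℝ) (hl : 1 < l) (f : E3 → E3)
    (hDSS : ∀ᵐ (x : E3) ∂volume, f x = l • f (l • x)) :
    ∀ᵐ (y : E3) ∂volume, ∀ k : ℤ, f (l ^ k • y) = (l ^ k)⁻¹ • f y := by
  have hl0 : l ≠ 0 := by positivity
  have key : ∀ᵐ (y : E3) ∂volume, ∀ k : ℤ, f (l ^ k • y) = l • f (l ^ (k + 1) • y) := by
    rw [ae_all_iff]
    intro k
    have hq : Measure.QuasiMeasurePreserving (fun y : E3 => l ^ k • y) volume volume :=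
      ⟨measurable_const_smul _, by
        rw [Measure.map_addHaar_smul _ (zpow_ne_zero k hl0)]
        exact Measure.smul_absolutelyContinuous⟩
    filter_upwards [hq.ae hDSS] with y hy
    rw [hy, smul_smul, zpow_add_one₀ hl0, mul_comm l]
  filter_upwards [key] with y hy k
  induction k using Int.induction_on with
  | zero => simp
  | succ n ih =>
    have h := hy n
    rw [ih] at h
    rw [← inv_smul_eq_iff₀ hl0, smul_smul] at h
    rw [← h, zpow_add_one₀ hl0, mul_inv, mul_comm]
  | pred n ih =>
    have h := hy (-(n : ℤ) - 1)
    rw [sub_add_cancel, ih, smul_smul] at h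
    rw [h, zpow_sub_one₀ hl0, mul_inv, inv_inv, mul_comm]

/-- The part of the superlevel set lying in the `k`-th annulus, pulled back to `A₁`. -/
lemma volume_superlevel_annulus (l : ℝ) (hl : 1 < l) (f : E3 → E3)
    (hDSS : ∀ᵐ (x : E3) ∂volume, f x = l • f (l • x)) (β : ℝ) (k : ℤ) :
    volume {x : E3 | β < ‖f x‖ ∧ l ^ k ≤ ‖x‖ ∧ ‖x‖ < l ^ (k + 1)} =
      ENNReal.ofReal ((l ^ k) ^ 3) *
        volume {y : E3 | l ^ k * β < ‖f y‖ ∧ 1 ≤ ‖y‖ ∧ ‖y‖ < l} := by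
  have hl0 : 0 < l := by positivity
  have hk : 0 < l ^ k := zpow_pos hl0 k
  have h1 := Measure.addHaar_preimage_smul (volume : Measure E3) hk.ne'
    {x : E3 | β < ‖f x‖ ∧ l ^ k ≤ ‖x‖ ∧ ‖x‖ < l ^ (k + 1)}
  have h2 : volume ((fun y : E3 => l ^ k • y) ⁻¹'
      {x : E3 | β < ‖f x‖ ∧ l ^ k ≤ ‖x‖ ∧ ‖x‖ < l ^ (k + 1)}) =
      volume {y : E3 | l ^ k * β < ‖f y‖ ∧ 1 ≤ ‖y‖ ∧ ‖y‖ < l} := by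
    apply measure_congr
    rw [Filter.eventuallyEq_set]
    filter_upwards [ae_dss_zpow l hl f hDSS] with y hy
    simp only [Set.mem_preimage, Set.mem_ofPred_eq, hy k, norm_smul, norm_inv,
      Real.norm_of_nonneg hk.le, zpow_add_one₀ hl0.ne']
    rw [lt_inv_mul_iff₀ hk, le_mul_iff_one_le_right hk, mul_lt_mul_iff_right₀ hk]
  rw [← h2, h1, ← mul_assoc, ← ENNReal.ofReal_mul (by positivity)]
  have : (l ^ k) ^ 3 * |((l ^ k) ^ Module.finrank ℝ E3)⁻¹| = 1 := by
    rw [finrank_euclideanSpace_fin, abs_of_pos (by positivity)]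
    exact mul_inv_cancel₀ (by positivity)
  rw [this]
  simp

/-- The geometric series bound: only the `k ≤ K` contribute, where `l ^ K < t / β ≤ l ^ (K + 1)`. -/
lemma tsum_zpow_indicator_le (l : ℝ) (hl : 1 < l) (β t : ℝ) (hβ : 0 < β) (ht : 0 ≤ t) :
    ENNReal.ofReal (β ^ 3) *
        ∑' k : ℤ, (if l ^ k * β < t then ENNReal.ofReal ((l ^ k) ^ 3) else 0) ≤
      ENNReal.ofReal (l ^ 3 / (3 * (l - 1))) * ENNReal.ofReal (t ^ 3) := by
  have hl0 : 0 < l := by positivity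
  rcases ht.eq_or_lt with rfl | ht
  · have : ∀ k : ℤ, ¬ (l ^ k * β < 0) := fun k => not_lt.2 (by positivity)
    simp [this]
  obtain ⟨K, hK1, hK2⟩ := exists_mem_Ioc_zpow (div_pos ht hβ) hl
  rw [lt_div_iff₀ hβ] at hK1
  rw [div_le_iff₀ hβ] at hK2
  have hr : (l ^ 3)⁻¹ < 1 := inv_lt_one_of_one_lt₀ (one_lt_pow₀ hl (by norm_num))
  have hsum : ∑' k : ℤ, (if l ^ k * β < t then ENNReal.ofReal ((l ^ k) ^ 3) else 0) ≤
      ENNReal.ofReal ((l ^ K) ^ 3 * (1 - (l ^ 3)⁻¹)⁻¹) := by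
    have hinj : Function.Injective (fun n : ℕ => K - (n : ℤ)) := fun a b h => by
      simpa using h
    rw [← hinj.tsum_eq]
    · calc _ ≤ ∑' n : ℕ, ENNReal.ofReal ((l ^ K) ^ 3 * (l ^ 3)⁻¹ ^ n) := by
            refine ENNReal.tsum_le_tsum fun n => ?_
            have : (l ^ (K - (n : ℤ))) ^ 3 = (l ^ K) ^ 3 * (l ^ 3)⁻¹ ^ n := by
              rw [zpow_sub₀ hl0.ne', zpow_natCast, div_pow, inv_pow, ← pow_mul, ← pow_mul,
                mul_comm 3 n, div_eq_mul_inv, pow_mul]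
            rw [← this]
            split_ifs
            · exact le_rfl
            · exact zero_le
        _ = _ := by
            rw [← ENNReal.ofReal_tsum_of_nonneg (fun n => by positivity)
              ((summable_geometric_of_lt_one (by positivity) hr).mul_left _), tsum_mul_left,
              tsum_geometric_of_lt_one (by positivity) hr]
    · intro k hk
      have hk' : l ^ k * β < t := by
        by_contra h
        simp [h] at hk
      have : k < K + 1 := by
        rw [← zpow_lt_zpow_iff_right₀ hl]
        exact lt_of_mul_lt_mul_right (hk'.trans_le hK2) hβ.le
      exact ⟨(K - k).toNat, by simp only; omega⟩
  refine (mul_le_mul_right hsum _).trans ?_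
  rw [← ENNReal.ofReal_mul (by positivity), ← ENNReal.ofReal_mul
    (div_nonneg (by positivity) (by linarith))]
  apply ENNReal.ofReal_le_ofReal
  have h3 : (l ^ K * β) ^ 3 ≤ t ^ 3 := by gcongr
  have hc : (1 - (l ^ 3)⁻¹)⁻¹ ≤ l ^ 3 / (3 * (l - 1)) := by
    have hp : 0 < l ^ 3 - 1 := sub_pos.2 (one_lt_pow₀ hl (by norm_num))
    have : (1 - (l ^ 3)⁻¹)⁻¹ = l ^ 3 / (l ^ 3 - 1) := by
      field_simp
    rw [this]
    refine div_le_div_of_nonneg_left (by positivity) (by linarith) ?_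
    nlinarith [mul_pos (sub_pos.2 hl) (sub_pos.2 hl)]
  have hc0 : 0 ≤ (1 - (l ^ 3)⁻¹)⁻¹ := inv_nonneg.2 (by linarith)
  calc β ^ 3 * ((l ^ K) ^ 3 * (1 - (l ^ 3)⁻¹)⁻¹)
      = (1 - (l ^ 3)⁻¹)⁻¹ * (l ^ K * β) ^ 3 := by ring
    _ ≤ _ := mul_le_mul hc h3 (by positivity) (hc0.trans hc)

/-- For a measurable `λ`-DSS vector field `f : ℝ³ → ℝ³` (`λ > 1`),
`sup_{β>0} β³·|{|f| > β}| ≤ (λ³/(3(λ−1))) ∫_{A₁} |f|³`. -/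
theorem stmt1 (l : ℝ) (hl : 1 < l)
    (f : EuclideanSpace ℝ (Fin 3) → EuclideanSpace ℝ (Fin 3))
    (hf : Measurable f)
    (hDSS : ∀ᵐ (x : EuclideanSpace ℝ (Fin 3)) ∂volume, f x = l • f (l • x)) :
    (⨆ (β : ℝ) (_ : 0 < β), ENNReal.ofReal (β ^ 3) *
        volume {x : EuclideanSpace ℝ (Fin 3) | β < ‖f x‖}) ≤
      ENNReal.ofReal (l ^ 3 / (3 * (l - 1))) *
        ∫⁻ x in {x : EuclideanSpace ℝ (Fin 3) | 1 ≤ ‖x‖ ∧ ‖x‖ < l},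
          (‖f x‖₊ : ℝ≥0∞) ^ 3 ∂volume := by
  refine iSup₂_le fun β hβ => ?_
  set A : Set E3 := {x | 1 ≤ ‖x‖ ∧ ‖x‖ < l} with hA
  have hmeas (c : ℝ) : MeasurableSet {y : E3 | c < ‖f y‖} :=
    measurableSet_lt measurable_const hf.norm
  -- The annuli cover everything except the origin, which is a null set.
  have hcover : volume {x : E3 | β < ‖f x‖} ≤
      ∑' k : ℤ, volume {x : E3 | β < ‖f x‖ ∧ l ^ k ≤ ‖x‖ ∧ ‖x‖ < l ^ (k + 1)} := by
    refine le_trans ?_ (measure_iUnion_le _)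
    apply measure_mono_ae
    have h0 : ∀ᵐ x : E3 ∂volume, x ≠ 0 := by simp [ae_iff]
    filter_upwards [h0] with x hx hxβ
    obtain ⟨k, hk⟩ := exists_mem_Ico_zpow (norm_pos_iff.2 hx) hl
    exact Set.mem_iUnion.2 ⟨k, hxβ, hk⟩
  have hterm (k : ℤ) : volume {x : E3 | β < ‖f x‖ ∧ l ^ k ≤ ‖x‖ ∧ ‖x‖ < l ^ (k + 1)} =
      ∫⁻ y in A, (if l ^ k * β < ‖f y‖ then ENNReal.ofReal ((l ^ k) ^ 3) else 0) := by
    rw [volume_superlevel_annulus l hl f hDSS β k]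
    have h := lintegral_indicator_const (μ := volume.restrict A) (hmeas (l ^ k * β))
      (ENNReal.ofReal ((l ^ k) ^ 3))
    rw [Measure.restrict_apply (hmeas _)] at h
    exact h.symm
  have hm (k : ℤ) : Measurable
      (fun y : E3 => if l ^ k * β < ‖f y‖ then ENNReal.ofReal ((l ^ k) ^ 3) else 0) :=
    Measurable.ite (hmeas _) measurable_const measurable_const
  calc ENNReal.ofReal (β ^ 3) * volume {x : E3 | β < ‖f x‖}
      ≤ ENNReal.ofReal (β ^ 3) * ∑' k : ℤ, ∫⁻ y in A,
          (if l ^ k * β < ‖f y‖ then ENNReal.ofReal ((l ^ k) ^ 3) else 0) := by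
        simp_rw [← hterm]
        exact mul_le_mul_right hcover _
    _ = ∫⁻ y in A, ENNReal.ofReal (β ^ 3) * ∑' k : ℤ,
          (if l ^ k * β < ‖f y‖ then ENNReal.ofReal ((l ^ k) ^ 3) else 0) := by
        rw [← lintegral_tsum fun k => (hm k).aemeasurable,
          lintegral_const_mul _ (Measurable.tsum hm)]
    _ ≤ ∫⁻ y in A, ENNReal.ofReal (l ^ 3 / (3 * (l - 1))) * (‖f y‖₊ : ℝ≥0∞) ^ 3 := by
        refine lintegral_mono fun y => ?_
        refine (tsum_zpow_indicator_le l hl β ‖f y‖ hβ (norm_nonneg _)).trans_eq ?_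
        rw [ENNReal.ofReal_pow (norm_nonneg _), ofReal_norm]
        rfl
    _ = _ := lintegral_const_mul' _ _ ENNReal.ofReal_ne_top
end

section
/- Let λ > 1 and let v₀ : ℝ³ → ℝ³ be a measurable λ-DSS vector field with ∫_{A₁}|v₀|³ dx < ∞, where A₁ = {x : 1 ≤ |x| < λ}. Define the heat extension V₀(x,t) = ∫_{ℝ³} (4πt)^{−3/2} e^{−|x−z|²/(4t)} v₀(z) dz. Then for every ε > 0 there exists R₀ ≥ 1 such that for all R ≥ R₀, all t ∈ [1, λ²], and all x with |x| ≥ R, one has |V₀(x,t)| ≤ ε. -/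
/-!
Put `f = |v₀|`. For `1 ≤ t ≤ l²` the heat kernel is at most `exp (-a |x - z|²)` with
`a = 1 / (4 l²)`, so it suffices that the Gaussian means of `f` tend to `0` at infinity
(`gaussian_mean_decay`).

If `l ^ k ≤ |x| < l ^ (k + 1)`, put `N = l ^ k`, so that `y = x / N` lies in `A₁`. Self-similarity
turns the Gaussian mean at `x` into `N² ∫ exp (-a N² |y - w|²) f w dw` (`lintegral_mul_pow_eq`),
and this must become small as `N → ∞`, uniformly in `y ∈ A₁` (`scaled_decay`). Split the integral
at a small ball around `y`.

* Inside the ball, Young's inequality `N² f ≤ σ N³ + σ⁻² f³` gives the bound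
  `σ ∫ exp (-a |w|²) dw + σ⁻² ∫_ball f³` (`near_bound`). The first term is small by the choice
  of `σ`, the second by the choice of the radius, because `f³` is integrable on a neighbourhood
  of `A₁` and hence equi-integrable there (`exists_radius`).
* Outside the ball, half of the Gaussian exponent yields a factor `N² exp (-c N²)`, and the other
  half leaves `∫ exp (-(a / 4) |w|²) f w dw` (`far_bound`). The latter is finite by summing over
  annuli (`lintegral_gaussian_mul_lt_top`).

All integrals are Lebesgue integrals in `ℝ≥0∞`, so no integrability has to be checked.
-/

open MeasureTheory
open scoped ENNReal NNReal

/-! ### Self-similar functions on annuli -/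

/-- Euclidean three-space. -/
abbrev E3 := EuclideanSpace ℝ (Fin 3)

/-- The half-open annulus `{x : l ^ k ≤ |x| < l ^ (k + 1)}`; `scaledAnnulus l 0` is `A₁`. -/
def scaledAnnulus (l : ℝ) (k : ℤ) : Set E3 := {x | l ^ k ≤ ‖x‖ ∧ ‖x‖ < l ^ (k + 1)}

lemma measurableSet_scaledAnnulus (l : ℝ) (k : ℤ) : MeasurableSet (scaledAnnulus l k) :=
  (measurableSet_le measurable_const measurable_norm).inter
    (measurableSet_lt measurable_norm measurable_const)

lemma smul_mem_scaledAnnulus {l : ℝ} (hl : 1 < l) (k : ℤ) (x : E3) :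
    l ^ k • x ∈ scaledAnnulus l k ↔ x ∈ scaledAnnulus l 0 := by
  have h0 : (0 : ℝ) < l := by linarith
  have hk : (0 : ℝ) < l ^ k := zpow_pos h0 k
  simp only [scaledAnnulus, Set.mem_ofPred_eq, norm_smul, Real.norm_eq_abs, abs_of_pos hk,
    zpow_zero, zero_add, zpow_one, zpow_add₀ h0.ne']
  rw [le_mul_iff_one_le_right hk, mul_lt_mul_iff_right₀ hk]

lemma lintegral_eq_smul {c : ℝ} (hc : 0 < c) {h : E3 → ℝ≥0∞} (hh : Measurable h) :
    ∫⁻ z, h z = ENNReal.ofReal (c ^ 3) * ∫⁻ w, h (c • w) := by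
  have h1 : ∫⁻ w, h (c • w) = ∫⁻ z, h z ∂(Measure.map (fun x : E3 => c • x) volume) :=
    (lintegral_map hh (measurable_const_smul c)).symm
  rw [h1, Measure.map_addHaar_smul _ hc.ne', lintegral_smul_measure, smul_eq_mul, ← mul_assoc,
    ← ENNReal.ofReal_mul (by positivity)]
  simp only [finrank_euclideanSpace, Fintype.card_fin]
  rw [abs_of_pos (by positivity), mul_inv_cancel₀ (by positivity)]
  simp

/-- A discretely self-similar function is self-similar for every integer power of the factor. -/
lemma dss_zpow {l : ℝ} (hl : 1 < l) {f : E3 → ℝ≥0∞}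
    (hf : ∀ᵐ x : E3, f x = ENNReal.ofReal l * f (l • x)) (k : ℤ) :
    ∀ᵐ x : E3, f (l ^ k • x) = ENNReal.ofReal ((l ^ k)⁻¹) * f x := by
  have h0 : (0 : ℝ) < l := by linarith
  have hnat : ∀ n : ℕ, ∀ᵐ x : E3, f x = ENNReal.ofReal (l ^ n) * f (l ^ n • x) := by
    intro n
    induction n with
    | zero => simp
    | succ n ih =>
      have hq := (Measure.quasiMeasurePreserving_smul (volume : Measure E3)
        (pow_pos h0 n).ne').ae hf
      filter_upwards [ih, hq] with x hx hx'
      rw [hx, hx', ← mul_assoc, ← ENNReal.ofReal_mul (by positivity), smul_smul, ← pow_succ,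
        ← pow_succ']
  obtain ⟨n, rfl | rfl⟩ := k.eq_nat_or_neg
  · filter_upwards [hnat n] with x hx
    rw [zpow_natCast, hx, ← mul_assoc, ← ENNReal.ofReal_mul (by positivity),
      inv_mul_cancel₀ (by positivity)]
    simp
  · have hq := (Measure.quasiMeasurePreserving_smul (volume : Measure E3)
        (zpow_pos h0 (-(n : ℤ))).ne').ae (hnat n)
    filter_upwards [hq] with x hx
    rw [hx, smul_smul, zpow_neg, zpow_natCast, mul_inv_cancel₀ (by positivity)]
    simp

/-- Change of variables `z = l ^ k w` in an integral of a power of a self-similar function. -/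
lemma lintegral_mul_pow_eq {l : ℝ} (hl : 1 < l) {f : E3 → ℝ≥0∞} (hfm : Measurable f)
    (hf : ∀ᵐ x : E3, f x = ENNReal.ofReal l * f (l • x)) (k : ℤ) (p : ℕ)
    {G : E3 → ℝ≥0∞} (hG : Measurable G) :
    ∫⁻ z, G z * f z ^ p
      = ENNReal.ofReal ((l ^ k) ^ 3 * ((l ^ k)⁻¹) ^ p) * ∫⁻ w, G (l ^ k • w) * f w ^ p := by
  have h0 : (0 : ℝ) < l := by linarith
  have hk : (0 : ℝ) < l ^ k := zpow_pos h0 k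
  rw [lintegral_eq_smul hk (by fun_prop), ENNReal.ofReal_mul (by positivity), mul_assoc,
    ← lintegral_const_mul (ENNReal.ofReal (((l ^ k)⁻¹) ^ p)) (by fun_prop)]
  congr 1
  refine lintegral_congr_ae ?_
  filter_upwards [dss_zpow hl hf k] with x hx
  rw [hx, mul_pow, ENNReal.ofReal_pow (by positivity)]
  ring

lemma lintegral_annulus {l : ℝ} (hl : 1 < l) {f : E3 → ℝ≥0∞} (hfm : Measurable f)
    (hf : ∀ᵐ x : E3, f x = ENNReal.ofReal l * f (l • x)) (k : ℤ) (p : ℕ) :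
    ∫⁻ z in scaledAnnulus l k, f z ^ p
      = ENNReal.ofReal ((l ^ k) ^ 3 * ((l ^ k)⁻¹) ^ p) * ∫⁻ w in scaledAnnulus l 0, f w ^ p := by
  have hind : ∀ j : ℤ, ∫⁻ z in scaledAnnulus l j, f z ^ p
      = ∫⁻ z, (scaledAnnulus l j).indicator (fun _ => (1 : ℝ≥0∞)) z * f z ^ p := by
    intro j
    rw [← lintegral_indicator (measurableSet_scaledAnnulus l j)]
    congr 1
    ext z
    by_cases hz : z ∈ scaledAnnulus l j <;> simp [hz]
  rw [hind, hind, lintegral_mul_pow_eq hl hfm hf k p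
    (measurable_const.indicator (measurableSet_scaledAnnulus l k))]
  congr 2
  ext w
  congr 1
  by_cases hw : w ∈ scaledAnnulus l 0
  · simp [hw, (smul_mem_scaledAnnulus hl k w).2 hw]
  · simp [hw, mt (smul_mem_scaledAnnulus hl k w).1 hw]

lemma lintegral_annulus_cube {l : ℝ} (hl : 1 < l) {f : E3 → ℝ≥0∞} (hfm : Measurable f)
    (hf : ∀ᵐ x : E3, f x = ENNReal.ofReal l * f (l • x)) (k : ℤ) :
    ∫⁻ z in scaledAnnulus l k, f z ^ 3 = ∫⁻ w in scaledAnnulus l 0, f w ^ 3 := by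
  have hk : (0 : ℝ) < l ^ k := zpow_pos (by linarith) k
  rw [lintegral_annulus hl hfm hf k 3, ← mul_pow, mul_inv_cancel₀ hk.ne']
  simp

lemma lintegral_annulus_one {l : ℝ} (hl : 1 < l) {f : E3 → ℝ≥0∞} (hfm : Measurable f)
    (hf : ∀ᵐ x : E3, f x = ENNReal.ofReal l * f (l • x)) (k : ℤ) :
    ∫⁻ z in scaledAnnulus l k, f z
      = ENNReal.ofReal ((l ^ k) ^ 2) * ∫⁻ w in scaledAnnulus l 0, f w := by
  have hk : (0 : ℝ) < l ^ k := zpow_pos (by linarith) k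
  have h := lintegral_annulus hl hfm hf k 1
  simp only [pow_one] at h
  rw [h]
  congr 2
  field_simp

/-! ### Finiteness of Gaussian means -/

/-- A consequence of Young's inequality that stands in for Hölder's inequality. -/
lemma sq_mul_le_cube_add (s u : ℝ≥0∞) : s ^ 2 * u ≤ s ^ 3 + u ^ 3 := by
  rcases le_total u s with h | h
  · calc s ^ 2 * u ≤ s ^ 2 * s := by gcongr
      _ = s ^ 3 := by ring
      _ ≤ _ := le_self_add
  · calc s ^ 2 * u ≤ u ^ 2 * u := by gcongr
      _ = u ^ 3 := by ring
      _ ≤ _ := le_add_self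

lemma lintegral_annulus_lt_top {l : ℝ} {f : E3 → ℝ≥0∞}
    (hint : ∫⁻ w in scaledAnnulus l 0, f w ^ 3 < ∞) :
    ∫⁻ w in scaledAnnulus l 0, f w < ∞ := by
  have hvol : volume (scaledAnnulus l 0) < ∞ := by
    refine lt_of_le_of_lt (measure_mono (t := Metric.ball (0 : E3) (l ^ (0 + 1 : ℤ))) ?_)
      measure_ball_lt_top
    intro x hx
    simpa using hx.2
  calc ∫⁻ w in scaledAnnulus l 0, f w ≤ ∫⁻ w in scaledAnnulus l 0, (1 + f w ^ 3) := by
        refine lintegral_mono fun w => ?_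
        simpa using sq_mul_le_cube_add 1 (f w)
    _ = volume (scaledAnnulus l 0) + ∫⁻ w in scaledAnnulus l 0, f w ^ 3 := by
        rw [lintegral_add_left measurable_const]; simp
    _ < ∞ := ENNReal.add_lt_top.2 ⟨hvol, hint⟩

lemma summable_zpow_sq_mul_exp {l b : ℝ} (hl : 1 < l) (hb : 0 < b) :
    Summable fun k : ℤ => (l ^ k) ^ 2 * Real.exp (-b * (l ^ k) ^ 2) := by
  have h0 : (0 : ℝ) < l := by linarith
  have hlt : (l⁻¹) ^ 2 < 1 := pow_lt_one₀ (by positivity) (inv_lt_one_of_one_lt₀ hl) (by norm_num)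
  have hgeo : Summable fun n : ℕ => ((l⁻¹) ^ 2) ^ n :=
    summable_geometric_of_lt_one (by positivity) hlt
  refine Summable.of_nat_of_neg ?_ ?_
  · refine Summable.of_nonneg_of_le (fun n => by positivity) (fun n => ?_)
      (hgeo.mul_left (2 / b ^ 2))
    have hu : 0 < (l ^ n) ^ 2 := by positivity
    have hrw : ((l⁻¹) ^ 2) ^ n = ((l ^ n) ^ 2)⁻¹ := by
      rw [← pow_mul, ← pow_mul, inv_pow, mul_comm]
    rw [zpow_natCast, hrw]
    set u := (l ^ n) ^ 2
    have he := Real.quadratic_le_exp_of_nonneg (mul_pos hb hu).le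
    have he' : (b * u) ^ 2 / 2 ≤ Real.exp (b * u) := by nlinarith [mul_pos hb hu]
    rw [neg_mul, Real.exp_neg, ← div_eq_mul_inv, ← div_eq_mul_inv,
      div_le_div_iff₀ (Real.exp_pos _) hu, div_mul_eq_mul_div, le_div_iff₀ (by positivity)]
    nlinarith
  · refine Summable.of_nonneg_of_le (fun n => by positivity) (fun n => ?_) hgeo
    have hrw : ((l⁻¹) ^ 2) ^ n = (l ^ (-(n : ℤ))) ^ 2 := by
      rw [zpow_neg, zpow_natCast, ← pow_mul, mul_comm, pow_mul, inv_pow]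
    rw [hrw]
    refine mul_le_of_le_one_right (by positivity) (Real.exp_le_one_iff.2 ?_)
    have : 0 < (l ^ (-(n : ℤ))) ^ 2 := by positivity
    nlinarith

/-- A self-similar function has finite Gaussian mean: its integral over the annulus of radius
`l ^ k` is proportional to `l ^ (2 * k)`, which is summable as `k → -∞`, while the Gaussian
takes care of `k → ∞`. -/
lemma lintegral_gaussian_mul_lt_top {l b : ℝ} (hl : 1 < l) (hb : 0 < b)
    {f : E3 → ℝ≥0∞} (hfm : Measurable f)
    (hf : ∀ᵐ x : E3, f x = ENNReal.ofReal l * f (l • x))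
    (hint : ∫⁻ w in scaledAnnulus l 0, f w ^ 3 < ∞) :
    ∫⁻ w, ENNReal.ofReal (Real.exp (-b * ‖w‖ ^ 2)) * f w < ∞ := by
  have h0 : (0 : ℝ) < l := by linarith
  set D := ∫⁻ w in scaledAnnulus l 0, f w with hD
  have hcover : (⋃ k : ℤ, scaledAnnulus l k) =ᵐ[volume] (Set.univ : Set E3) := by
    rw [ae_eq_univ]
    refine measure_mono_null (t := {0}) ?_ (by simp)
    intro x hx
    by_contra hx0
    obtain ⟨k, hk⟩ := exists_mem_Ico_zpow (norm_pos_iff.2 hx0) hl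
    exact hx (Set.mem_iUnion.2 ⟨k, hk⟩)
  have hterm : ∀ k : ℤ, ∫⁻ w in scaledAnnulus l k,
      ENNReal.ofReal (Real.exp (-b * ‖w‖ ^ 2)) * f w
      ≤ ENNReal.ofReal ((l ^ k) ^ 2 * Real.exp (-b * (l ^ k) ^ 2)) * D := by
    intro k
    have hk : (0 : ℝ) < l ^ k := zpow_pos h0 k
    calc _ ≤ ∫⁻ w in scaledAnnulus l k, ENNReal.ofReal (Real.exp (-b * (l ^ k) ^ 2)) * f w := by
          refine setLIntegral_mono' (measurableSet_scaledAnnulus l k) fun w hw => ?_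
          have : (l ^ k) ^ 2 ≤ ‖w‖ ^ 2 := pow_le_pow_left₀ hk.le hw.1 2
          gcongr ENNReal.ofReal (Real.exp ?_) * _
          nlinarith
      _ = _ := by
          rw [lintegral_const_mul _ hfm, lintegral_annulus_one hl hfm hf k, ← mul_assoc,
            ← ENNReal.ofReal_mul (by positivity), mul_comm (Real.exp _)]
  calc _ = ∫⁻ w in (⋃ k : ℤ, scaledAnnulus l k),
        ENNReal.ofReal (Real.exp (-b * ‖w‖ ^ 2)) * f w := by
        rw [setLIntegral_congr hcover, setLIntegral_univ]
    _ ≤ ∑' k : ℤ, ∫⁻ w in scaledAnnulus l k,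
        ENNReal.ofReal (Real.exp (-b * ‖w‖ ^ 2)) * f w := lintegral_iUnion_le _ _
    _ ≤ ∑' k : ℤ, ENNReal.ofReal ((l ^ k) ^ 2 * Real.exp (-b * (l ^ k) ^ 2)) * D :=
        ENNReal.tsum_le_tsum hterm
    _ = ENNReal.ofReal (∑' k : ℤ, (l ^ k) ^ 2 * Real.exp (-b * (l ^ k) ^ 2)) * D := by
        rw [ENNReal.tsum_mul_right, ENNReal.ofReal_tsum_of_nonneg (fun k => by positivity)
          (summable_zpow_sq_mul_exp hl hb)]
    _ < ∞ := ENNReal.mul_lt_top ENNReal.ofReal_lt_top (lintegral_annulus_lt_top hint)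

/-! ### The rescaled Gaussian mean near and away from its centre -/

lemma lintegral_gaussian_lt_top {a : ℝ} (ha : 0 < a) :
    ∫⁻ w : E3, ENNReal.ofReal (Real.exp (-a * ‖w‖ ^ 2)) < ∞ := by
  have h := (GaussianFourier.integrable_cexp_neg_mul_sq_norm_add (b := (a : ℂ)) (V := E3)
    (by simpa using ha) 0 0).norm
  have h2 : Integrable (fun w : E3 => Real.exp (-a * ‖w‖ ^ 2)) := by
    refine h.congr (Filter.Eventually.of_forall fun w => ?_)
    simp only [Complex.norm_exp]
    norm_cast
    simp
  exact h2.lintegral_lt_top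

/-- The `L¹` norm of `N³ exp (-a N² |y - ·|²)` depends neither on `N` nor on `y`. -/
lemma lintegral_scaled_gaussian {a N : ℝ} (hN : 0 < N) (y : E3) :
    ∫⁻ w : E3, ENNReal.ofReal (N ^ 3 * Real.exp (-a * N ^ 2 * ‖y - w‖ ^ 2))
      = ∫⁻ w : E3, ENNReal.ofReal (Real.exp (-a * ‖w‖ ^ 2)) := by
  rw [lintegral_sub_left_eq_self
    (fun w : E3 => ENNReal.ofReal (N ^ 3 * Real.exp (-a * N ^ 2 * ‖w‖ ^ 2))) y,
    lintegral_eq_smul hN (h := fun w : E3 => ENNReal.ofReal (Real.exp (-a * ‖w‖ ^ 2)))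
      (by fun_prop), ← lintegral_const_mul _ (by fun_prop)]
  congr 1
  ext w
  rw [← ENNReal.ofReal_mul (by positivity), norm_smul, Real.norm_eq_abs, mul_pow, sq_abs]
  ring_nf

/-- Young's inequality at height `σ * N`: the first term is small through `σ`, the second one
through the set `B`. -/
lemma near_bound {a N σ : ℝ} (ha : 0 < a) (hN : 0 < N) (hσ : 0 < σ) (y : E3) (B : Set E3)
    {f : E3 → ℝ≥0∞} (hfm : Measurable f) :
    ∫⁻ w in B, ENNReal.ofReal (N ^ 2 * Real.exp (-a * N ^ 2 * ‖y - w‖ ^ 2)) * f w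
      ≤ ENNReal.ofReal σ * (∫⁻ w : E3, ENNReal.ofReal (Real.exp (-a * ‖w‖ ^ 2)))
        + ENNReal.ofReal (σ⁻¹ ^ 2) * ∫⁻ w in B, f w ^ 3 := by
  have hpt : ∀ w : E3, ENNReal.ofReal (N ^ 2 * Real.exp (-a * N ^ 2 * ‖y - w‖ ^ 2)) * f w
      ≤ ENNReal.ofReal σ * ENNReal.ofReal (N ^ 3 * Real.exp (-a * N ^ 2 * ‖y - w‖ ^ 2))
        + ENNReal.ofReal (σ⁻¹ ^ 2) * f w ^ 3 := by
    intro w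
    set e := Real.exp (-a * N ^ 2 * ‖y - w‖ ^ 2) with he
    have he0 : 0 ≤ e := (Real.exp_pos _).le
    have he1 : e ≤ 1 := by
      refine Real.exp_le_one_iff.2 ?_
      have : 0 ≤ a * N ^ 2 * ‖y - w‖ ^ 2 := by positivity
      nlinarith
    have hy := sq_mul_le_cube_add (ENNReal.ofReal (σ * N)) (f w)
    calc ENNReal.ofReal (N ^ 2 * e) * f w
        = ENNReal.ofReal (σ⁻¹ ^ 2 * e) * (ENNReal.ofReal (σ * N) ^ 2 * f w) := by
          rw [← mul_assoc, ← ENNReal.ofReal_pow (by positivity),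
            ← ENNReal.ofReal_mul (by positivity)]
          congr 2
          field_simp
      _ ≤ ENNReal.ofReal (σ⁻¹ ^ 2 * e) * (ENNReal.ofReal (σ * N) ^ 3 + f w ^ 3) := by gcongr
      _ = ENNReal.ofReal σ * ENNReal.ofReal (N ^ 3 * e)
          + ENNReal.ofReal (σ⁻¹ ^ 2 * e) * f w ^ 3 := by
          rw [mul_add, ← ENNReal.ofReal_pow (by positivity),
            ← ENNReal.ofReal_mul (by positivity), ← ENNReal.ofReal_mul (by positivity)]
          congr 2
          field_simp
      _ ≤ _ := by
          gcongr
          exact mul_le_of_le_one_right (by positivity) he1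
  calc _ ≤ ∫⁻ w in B, (ENNReal.ofReal σ *
          ENNReal.ofReal (N ^ 3 * Real.exp (-a * N ^ 2 * ‖y - w‖ ^ 2))
        + ENNReal.ofReal (σ⁻¹ ^ 2) * f w ^ 3) := lintegral_mono fun w => hpt w
    _ = ENNReal.ofReal σ * (∫⁻ w in B,
          ENNReal.ofReal (N ^ 3 * Real.exp (-a * N ^ 2 * ‖y - w‖ ^ 2)))
        + ENNReal.ofReal (σ⁻¹ ^ 2) * ∫⁻ w in B, f w ^ 3 := by
        rw [lintegral_add_left (by fun_prop), lintegral_const_mul _ (by fun_prop),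
          lintegral_const_mul _ (by fun_prop)]
    _ ≤ _ := by
        rw [← lintegral_scaled_gaussian hN y]
        gcongr
        exact Measure.restrict_le_self

/-- Equi-integrability of `f ^ 3`: balls centred in `A₁` of a small common radius lie in three
consecutive annuli, on whose union `f ^ 3` is integrable. -/
lemma exists_radius {l : ℝ} (hl : 1 < l) {f : E3 → ℝ≥0∞} (hfm : Measurable f)
    (hf : ∀ᵐ x : E3, f x = ENNReal.ofReal l * f (l • x))
    (hint : ∫⁻ w in scaledAnnulus l 0, f w ^ 3 < ∞) {η : ℝ≥0∞} (hη : η ≠ 0) :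
    ∃ r : ℝ, 0 < r ∧ ∀ y ∈ scaledAnnulus l 0, ∫⁻ w in Metric.ball y r, f w ^ 3 ≤ η := by
  have h0 : (0 : ℝ) < l := by linarith
  set K : Set E3 := scaledAnnulus l (-1) ∪ (scaledAnnulus l 0 ∪ scaledAnnulus l 1) with hK
  have hKint : ∫⁻ w in K, f w ^ 3 ≠ ∞ := by
    refine ne_top_of_le_ne_top ?_ ((lintegral_union_le _ _ _).trans
      (add_le_add_right (lintegral_union_le _ _ _) _))
    rw [lintegral_annulus_cube hl hfm hf (-1), lintegral_annulus_cube hl hfm hf 1]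
    finiteness
  obtain ⟨δ, hδ, hsmall⟩ := exists_pos_setLIntegral_lt_of_measure_lt hKint hη
  obtain ⟨r₁, hr₁, hball⟩ : ∃ r₁ : ℝ, 0 < r₁ ∧ ∀ r ≤ r₁, ∀ y : E3,
      volume (Metric.ball y r) < δ := by
    have ht : Filter.Tendsto (fun r : ℝ => ENNReal.ofReal (r ^ 3)
        * volume (Metric.ball (0 : E3) 1)) (nhdsWithin 0 (Set.Ioi 0)) (nhds 0) := by
      have h1 : Filter.Tendsto (fun r : ℝ => ENNReal.ofReal (r ^ 3))
          (nhdsWithin 0 (Set.Ioi 0)) (nhds 0) := by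
        have : Continuous (fun r : ℝ => ENNReal.ofReal (r ^ 3)) :=
          ENNReal.continuous_ofReal.comp (continuous_pow 3)
        simpa using this.continuousWithinAt (s := Set.Ioi 0) (x := 0) |>.tendsto
      have h2 := ENNReal.Tendsto.mul_const h1
        (b := volume (Metric.ball (0 : E3) 1)) (Or.inr measure_ball_lt_top.ne)
      rwa [zero_mul] at h2
    obtain ⟨r₁, hlt, hpos⟩ := ((ht.eventually_lt_const hδ).and self_mem_nhdsWithin).exists
    have hpos' : (0 : ℝ) < r₁ := hpos
    refine ⟨r₁, hpos', fun r hr y => ?_⟩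
    refine lt_of_le_of_lt (measure_mono (Metric.ball_subset_ball hr)) ?_
    rw [Measure.addHaar_ball _ y hpos'.le]
    simpa using hlt
  have hli : l⁻¹ < 1 := inv_lt_one_of_one_lt₀ hl
  refine ⟨min r₁ (min (1 - l⁻¹) (l ^ 2 - l)), ?_, fun y hy => ?_⟩
  · have : l < l ^ 2 := by nlinarith
    exact lt_min hr₁ (lt_min (by linarith) (by linarith))
  set r := min r₁ (min (1 - l⁻¹) (l ^ 2 - l)) with hr
  have hra : r ≤ 1 - l⁻¹ := (min_le_right _ _).trans (min_le_left _ _)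
  have hrb : r ≤ l ^ 2 - l := (min_le_right _ _).trans (min_le_right _ _)
  have hsub : Metric.ball y r ⊆ K := by
    intro w hw
    have hw' : ‖w - y‖ < r := by simpa [dist_eq_norm] using hw
    have hy1 : 1 ≤ ‖y‖ := by simpa using hy.1
    have hy2 : ‖y‖ < l := by simpa using hy.2
    have hw1 : l⁻¹ ≤ ‖w‖ := by
      have := norm_sub_norm_le y w
      rw [norm_sub_rev] at this
      linarith
    have hw2 : ‖w‖ < l ^ 2 := by
      have := norm_sub_norm_le w y
      linarith
    simp only [hK, scaledAnnulus, Set.mem_union, Set.mem_ofPred_eq]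
    norm_num
    rcases lt_or_ge ‖w‖ 1 with h | h
    · exact Or.inl ⟨hw1, h⟩
    rcases lt_or_ge ‖w‖ l with h' | h'
    · exact Or.inr (Or.inl ⟨h, h'⟩)
    · refine Or.inr (Or.inr ⟨h', ?_⟩)
      exact_mod_cast hw2
  have hres := hsmall (Metric.ball y r)
    (lt_of_le_of_lt (Measure.restrict_apply_le _ _) (hball r (min_le_left _ _) y))
  rw [Measure.restrict_restrict Metric.isOpen_ball.measurableSet,
    Set.inter_eq_left.2 hsub] at hres
  exact hres.le

/-- Away from `y` the scaled Gaussian is dominated by a fixed Gaussian centred at the origin,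
with a constant that decays in `N`. -/
lemma far_bound {a l N r : ℝ} (ha : 0 < a) (hN : 1 ≤ N) (hr : 0 < r)
    {y : E3} (hy : ‖y‖ ≤ l) {f : E3 → ℝ≥0∞} (hfm : Measurable f) :
    ∫⁻ w in (Metric.ball y r)ᶜ,
        ENNReal.ofReal (N ^ 2 * Real.exp (-a * N ^ 2 * ‖y - w‖ ^ 2)) * f w
      ≤ ENNReal.ofReal (N ^ 2 * Real.exp (-(a * r ^ 2 / 2) * N ^ 2) * Real.exp (a * l ^ 2 / 2))
        * ∫⁻ w, ENNReal.ofReal (Real.exp (-(a / 4) * ‖w‖ ^ 2)) * f w := by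
  rw [← lintegral_const_mul _ (by fun_prop)]
  refine le_trans (setLIntegral_mono' Metric.isOpen_ball.measurableSet.compl fun w hw => ?_)
    (setLIntegral_le_lintegral _ _)
  rw [← mul_assoc, ← ENNReal.ofReal_mul (by positivity)]
  gcongr ENNReal.ofReal ?_ * _
  rw [mul_assoc (N ^ 2), mul_assoc (N ^ 2), ← Real.exp_add, ← Real.exp_add]
  gcongr
  have hw' : r ≤ ‖y - w‖ := by
    simpa [dist_eq_norm, norm_sub_rev] using hw
  have h1 : r ^ 2 ≤ ‖y - w‖ ^ 2 := pow_le_pow_left₀ hr.le hw' 2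
  have h2 : ‖y‖ ^ 2 ≤ l ^ 2 := pow_le_pow_left₀ (norm_nonneg _) hy 2
  have h3 : ‖w‖ ^ 2 ≤ 2 * ‖y - w‖ ^ 2 + 2 * ‖y‖ ^ 2 := by
    have h : ‖w‖ ≤ ‖y - w‖ + ‖y‖ := by
      have := norm_sub_le y (y - w)
      rw [sub_sub_cancel] at this
      linarith
    nlinarith [norm_nonneg w, norm_nonneg y, norm_nonneg (y - w), sq_nonneg (‖y - w‖ - ‖y‖)]
  have hN2 : 1 ≤ N ^ 2 := one_le_pow₀ hN
  -- half of the exponent gives the decay in `N`, the other half the decay in `w`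
  have h4 : a * r ^ 2 * N ^ 2 ≤ a * N ^ 2 * ‖y - w‖ ^ 2 := by
    have : 0 ≤ a * N ^ 2 := by positivity
    nlinarith
  have h5 : a * (‖w‖ ^ 2 / 2 - l ^ 2) ≤ a * N ^ 2 * ‖y - w‖ ^ 2 := by
    have h6 : ‖w‖ ^ 2 / 2 - l ^ 2 ≤ N ^ 2 * ‖y - w‖ ^ 2 := by
      nlinarith [sq_nonneg ‖y - w‖]
    rw [mul_assoc]
    exact mul_le_mul_of_nonneg_left h6 ha.le
  nlinarith

lemma tendsto_sq_mul_exp {c : ℝ} (hc : 0 < c) :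
    Filter.Tendsto (fun N : ℝ => N ^ 2 * Real.exp (-c * N ^ 2)) Filter.atTop (nhds 0) := by
  have h1 : Filter.Tendsto (fun N : ℝ => c * N ^ 2) Filter.atTop Filter.atTop :=
    (Filter.tendsto_pow_atTop (by norm_num)).const_mul_atTop hc
  have h2 := ((Real.tendsto_pow_mul_exp_neg_atTop_nhds_zero 1).comp h1).const_mul c⁻¹
  rw [mul_zero] at h2
  refine h2.congr fun N => ?_
  simp only [Function.comp, pow_one, neg_mul]
  field_simp

/-! ### Decay of Gaussian means at infinity -/

/-- The decay estimate after rescaling `x` into `A₁`. -/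
lemma scaled_decay {l a : ℝ} (hl : 1 < l) (ha : 0 < a) {f : E3 → ℝ≥0∞} (hfm : Measurable f)
    (hf : ∀ᵐ x : E3, f x = ENNReal.ofReal l * f (l • x))
    (hint : ∫⁻ w in scaledAnnulus l 0, f w ^ 3 < ∞) {ε : ℝ} (hε : 0 < ε) :
    ∃ N₀ : ℝ, ∀ N : ℝ, 1 ≤ N → N₀ ≤ N → ∀ y ∈ scaledAnnulus l 0,
      ∫⁻ w, ENNReal.ofReal (N ^ 2 * Real.exp (-a * N ^ 2 * ‖y - w‖ ^ 2)) * f w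
        ≤ ENNReal.ofReal ε := by
  set C := ∫⁻ w : E3, ENNReal.ofReal (Real.exp (-a * ‖w‖ ^ 2)) with hC
  set J := ∫⁻ w, ENNReal.ofReal (Real.exp (-(a / 4) * ‖w‖ ^ 2)) * f w with hJ
  have hCt : C < ∞ := lintegral_gaussian_lt_top ha
  have hJt : J < ∞ := lintegral_gaussian_mul_lt_top hl (by positivity) hfm hf hint
  have hε3 : 0 < ε / 3 := by positivity
  obtain ⟨σ, hσ, hσC⟩ : ∃ σ : ℝ, 0 < σ ∧ ENNReal.ofReal σ * C ≤ ENNReal.ofReal (ε / 3) := by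
    refine ⟨ε / 3 / (C.toReal + 1), by positivity, ?_⟩
    rw [← ENNReal.ofReal_toReal hCt.ne, ← ENNReal.ofReal_mul (by positivity),
      ENNReal.toReal_ofReal ENNReal.toReal_nonneg]
    apply ENNReal.ofReal_le_ofReal
    rw [div_mul_eq_mul_div, div_le_iff₀ (by positivity)]
    nlinarith
  obtain ⟨r, hr, hball⟩ := exists_radius hl hfm hf hint
    (η := ENNReal.ofReal (σ ^ 2 * (ε / 3))) (by simpa using by positivity)
  have hlim := ((tendsto_sq_mul_exp (c := a * r ^ 2 / 2) (by positivity)).mul_const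
    (Real.exp (a * l ^ 2 / 2))).mul_const J.toReal
  simp only [zero_mul] at hlim
  obtain ⟨N₀, hN₀⟩ := Filter.eventually_atTop.1 (hlim.eventually_le_const hε3)
  refine ⟨N₀, fun N hN1 hN y hy => ?_⟩
  have hyl : ‖y‖ ≤ l := by simpa using hy.2.le
  have hnear := near_bound ha (by linarith : 0 < N) hσ y (Metric.ball y r) hfm
  have hfar := far_bound ha hN1 hr hyl hfm
  rw [← hJ] at hfar
  rw [← hC] at hnear
  have h2 : ENNReal.ofReal (σ⁻¹ ^ 2) * ∫⁻ w in Metric.ball y r, f w ^ 3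
      ≤ ENNReal.ofReal (ε / 3) := by
    refine (mul_le_mul_right (hball y hy) _).trans (le_of_eq ?_)
    rw [← ENNReal.ofReal_mul (by positivity)]
    congr 1
    field_simp
  have h3 : ENNReal.ofReal (N ^ 2 * Real.exp (-(a * r ^ 2 / 2) * N ^ 2)
      * Real.exp (a * l ^ 2 / 2)) * J ≤ ENNReal.ofReal (ε / 3) := by
    rw [← ENNReal.ofReal_toReal hJt.ne, ← ENNReal.ofReal_mul (by positivity)]
    exact ENNReal.ofReal_le_ofReal (hN₀ N hN)
  rw [← lintegral_add_compl _ (Metric.isOpen_ball (x := y) (ε := r)).measurableSet]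
  calc _ ≤ (ENNReal.ofReal (ε / 3) + ENNReal.ofReal (ε / 3)) + ENNReal.ofReal (ε / 3) :=
        add_le_add (hnear.trans (add_le_add hσC h2)) (hfar.trans h3)
    _ = ENNReal.ofReal ε := by
        rw [← ENNReal.ofReal_add hε3.le hε3.le, ← ENNReal.ofReal_add (by positivity) hε3.le]
        congr 1
        ring

/-- Gaussian means of a self-similar function, locally in `L³` away from `0`, vanish at infinity. -/
lemma gaussian_mean_decay {l a : ℝ} (hl : 1 < l) (ha : 0 < a) {f : E3 → ℝ≥0∞}
    (hfm : Measurable f) (hf : ∀ᵐ x : E3, f x = ENNReal.ofReal l * f (l • x))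
    (hint : ∫⁻ w in scaledAnnulus l 0, f w ^ 3 < ∞) {ε : ℝ} (hε : 0 < ε) :
    ∃ R₀ : ℝ, 1 ≤ R₀ ∧ ∀ x : E3, R₀ ≤ ‖x‖ →
      ∫⁻ z, ENNReal.ofReal (Real.exp (-a * ‖x - z‖ ^ 2)) * f z ≤ ENNReal.ofReal ε := by
  have h0 : (0 : ℝ) < l := by linarith
  obtain ⟨N₀, hN₀⟩ := scaled_decay hl ha hfm hf hint hε
  refine ⟨max 1 (l * N₀), le_max_left _ _, fun x hx => ?_⟩
  obtain ⟨k, hk1, hk2⟩ := exists_nat_pow_near ((le_max_left _ _).trans hx) hl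
  have hkpos : 0 < l ^ k := by positivity
  have hN : N₀ ≤ l ^ k := by
    have h1 : l * N₀ < l * l ^ k := by
      rw [← pow_succ']
      exact ((le_max_right _ _).trans hx).trans_lt hk2
    exact (lt_of_mul_lt_mul_left h1 h0.le).le
  have hxy : l ^ (k : ℤ) • ((l ^ k)⁻¹ • x) = x := by
    rw [zpow_natCast, smul_smul, mul_inv_cancel₀ hkpos.ne', one_smul]
  have hy : (l ^ k)⁻¹ • x ∈ scaledAnnulus l 0 := by
    rw [← smul_mem_scaledAnnulus hl k, hxy]
    refine ⟨by simpa using hk1, ?_⟩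
    exact_mod_cast hk2
  refine le_trans (le_of_eq ?_) (hN₀ (l ^ k) (one_le_pow₀ hl.le) hN _ hy)
  have h := lintegral_mul_pow_eq hl hfm hf k 1
    (G := fun z => ENNReal.ofReal (Real.exp (-a * ‖x - z‖ ^ 2))) (by fun_prop)
  simp only [pow_one] at h
  rw [h, ← lintegral_const_mul _ (by fun_prop)]
  congr 1
  ext w
  rw [← mul_assoc, ← ENNReal.ofReal_mul (by positivity)]
  congr 2
  conv_lhs => rw [← hxy, ← smul_sub, norm_smul, zpow_natCast, Real.norm_eq_abs,
    abs_of_pos hkpos, mul_pow, ← mul_assoc]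
  field_simp

/-! ### The heat extension -/

/-- For a measurable `λ`-DSS vector field `v₀ : ℝ³ → ℝ³` (`λ > 1`) with
`∫_{A₁} |v₀|³ < ∞`, the heat extension
`V₀(x,t) = ∫ (4πt)^{-3/2} e^{-|x-z|²/(4t)} v₀(z) dz` satisfies: for every `ε > 0`
there is `R₀ ≥ 1` such that `|V₀(x,t)| ≤ ε` whenever `R ≥ R₀`, `t ∈ [1,λ²]`, `|x| ≥ R`. -/
theorem stmt4 (l : ℝ) (hl : 1 < l)
    (v₀ : EuclideanSpace ℝ (Fin 3) → EuclideanSpace ℝ (Fin 3))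
    (hv₀ : Measurable v₀)
    (hDSS : ∀ᵐ (x : EuclideanSpace ℝ (Fin 3)) ∂volume, v₀ x = l • v₀ (l • x))
    (hint : (∫⁻ x in {x : EuclideanSpace ℝ (Fin 3) | 1 ≤ ‖x‖ ∧ ‖x‖ < l},
        (‖v₀ x‖₊ : ℝ≥0∞) ^ 3 ∂volume) < ⊤)
    (V : EuclideanSpace ℝ (Fin 3) → ℝ → EuclideanSpace ℝ (Fin 3))
    (hV : ∀ x t, V x t =
      ∫ z, ((4 * Real.pi * t) ^ (-(3:ℝ)/2) * Real.exp (-‖x - z‖ ^ 2 / (4 * t))) • v₀ z) :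
    ∀ ε : ℝ, 0 < ε → ∃ R₀ : ℝ, 1 ≤ R₀ ∧
      ∀ R : ℝ, R₀ ≤ R → ∀ t ∈ Set.Icc (1 : ℝ) (l ^ 2),
        ∀ x : EuclideanSpace ℝ (Fin 3), R ≤ ‖x‖ → ‖V x t‖ ≤ ε := by
  intro ε hε
  have h0 : (0 : ℝ) < l := by linarith
  have hf : ∀ᵐ x : E3, ‖v₀ x‖ₑ = ENNReal.ofReal l * ‖v₀ (l • x)‖ₑ := by
    filter_upwards [hDSS] with x hx
    rw [hx, enorm_smul, Real.enorm_eq_ofReal h0.le]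
  have hint' : ∫⁻ w in scaledAnnulus l 0, ‖v₀ w‖ₑ ^ 3 < ∞ := by
    simpa [scaledAnnulus, enorm_eq_nnnorm] using hint
  obtain ⟨R₀, hR₀, hdecay⟩ := gaussian_mean_decay hl (a := 1 / (4 * l ^ 2)) (by positivity)
    hv₀.enorm hf hint' hε
  refine ⟨R₀, hR₀, fun R hR t ht x hx => ?_⟩
  obtain ⟨ht1, ht2⟩ := ht
  have htpos : 0 < t := by linarith
  rw [← ENNReal.ofReal_le_ofReal_iff hε.le, ofReal_norm, hV]
  refine (enorm_integral_le_lintegral_enorm _).trans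
    (le_trans (lintegral_mono fun z => ?_) (hdecay x (hR.trans hx)))
  have hpre : (4 * Real.pi * t) ^ (-(3:ℝ)/2) ≤ 1 := by
    refine Real.rpow_le_one_of_one_le_of_nonpos ?_ (by norm_num)
    nlinarith [Real.pi_gt_three]
  have hexp : Real.exp (-‖x - z‖ ^ 2 / (4 * t))
      ≤ Real.exp (-(1 / (4 * l ^ 2)) * ‖x - z‖ ^ 2) := by
    rw [Real.exp_le_exp, neg_div, neg_mul, neg_le_neg_iff, one_div, inv_mul_eq_div]
    gcongr
  rw [enorm_smul, Real.enorm_eq_ofReal (by positivity)]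
  gcongr
  calc _ ≤ 1 * Real.exp (-‖x - z‖ ^ 2 / (4 * t)) := by gcongr
    _ ≤ _ := by rwa [one_mul]
end
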